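/- Consider the leader-following multi-agent system under the stated hypotheses (Assumption 1 with possibly unknown growth rates ρ_{k,j}, L̄ = L_G + B_L positive definite, and A_c = I_N⊗A − L̄⊗(BK) Hurwitz). Then there exists a proportional coefficient b ≥ T such that for every family of continuously differentiable functions x_0,…,x_N : [0,T) → ℝⁿ solving the closed-loop system with the distributed state-feedback protocol u_k(t) = −K Λ_{r(t)} ( Σ_{j=1}^N a_{kj}(x_k(t)−x_j(t)) + b_k(x_k(t)−x_0(t)) ), the following hold for each follower k ∈ {1,…,N}: (i) x_k − x_0 is bounded on [0,T); (ii) there exist constants κ > 0 and C ≥ 0 (C depending on the initial data) such that |x_k(t) − x_0(t)| ≤ C (T−t)^{(κ+2)/2} for all t ∈ [0,T), so x_k(t) − x_0(t) → 0 as t → T⁻; (iii) the control u_k is bounded on [0,T). -/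

import Mathlib

open Matrix Filter Set
open scoped Kronecker

/-- The Euclidean norm of a finitely-indexed real vector. -/
noncomputable def enorm' {ι : Type*} [Fintype ι] (v : ι → ℝ) : ℝ :=
  Real.sqrt (∑ i, v i ^ 2)

/-- A real square matrix is Hurwitz if every (complex) eigenvalue has negative
real part. -/
def IsHurwitz {m : Type*} [Fintype m] [DecidableEq m] (M : Matrix m m ℝ) : Prop :=
  ∀ s : ℂ, (s • (1 : Matrix m m ℂ) - M.map (algebraMap ℝ ℂ)).det = 0 → s.re < 0

theorem aux_mem_spec {m : Type*} [Fintype m] [DecidableEq m] (M : Matrix m m ℂ) (s : ℂ) :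
    s ∈ spectrum ℂ M ↔ (s • (1 : Matrix m m ℂ) - M).det = 0 := by
  rw [spectrum.mem_iff, Matrix.isUnit_iff_isUnit_det, isUnit_iff_ne_zero, not_not,
    Algebra.algebraMap_eq_smul_one]

theorem aux_pow_zero {E : Type*} [NormedRing E] [NormedAlgebra ℂ E] [CompleteSpace E] [Nontrivial E]
    (M : E) (h : ∀ s ∈ spectrum ℂ M, ‖s‖ < 1) : Tendsto (fun k => M ^ k) atTop (nhds 0) := by
  have h1 : spectralRadius ℂ M < ((1 : NNReal) : ENNReal) :=
    spectrum.spectralRadius_lt_of_forall_lt M (fun k hk => by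
      have := h k hk
      exact_mod_cast this)
  obtain ⟨q, hq1, hq2⟩ := ENNReal.lt_iff_exists_nnreal_btwn.1 h1
  have h2 := (spectrum.pow_nnnorm_pow_one_div_tendsto_nhds_spectralRadius M).eventually_lt_const hq1
  have hq3 : q < 1 := by exact_mod_cast hq2
  have h3 : Tendsto (fun k => (q : ℝ) ^ k) atTop (nhds 0) :=
    tendsto_pow_atTop_nhds_zero_of_lt_one q.2 (by exact_mod_cast hq3)
  refine squeeze_zero_norm' ?_ h3
  filter_upwards [h2, eventually_gt_atTop 0] with k hk hk0
  have hk0' : (k : ℝ) ≠ 0 := by positivity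
  have h4 : (‖M ^ k‖₊ : ENNReal) ≤ (q : ENNReal) ^ k := by
    calc (‖M ^ k‖₊ : ENNReal) = ((‖M ^ k‖₊ : ENNReal) ^ (1 / (k:ℝ))) ^ (k:ℝ) := by
          rw [← ENNReal.rpow_mul]; simp [hk0']
      _ ≤ (q : ENNReal) ^ (k:ℝ) := ENNReal.rpow_le_rpow hk.le (by positivity)
      _ = _ := by simp
  have h5 : ‖M ^ k‖₊ ≤ q ^ k := by exact_mod_cast h4
  exact_mod_cast h5

theorem aux_step (S : Set ℂ) (hS : S.Finite) (h : ∀ s ∈ S, s.re < 0) :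
    ∃ ε : ℝ, 0 < ε ∧ ∀ s ∈ S, ‖1 + (ε : ℂ) * s‖ < 1 := by
  have h1 : ∀ᶠ ε : ℝ in nhdsWithin (0:ℝ) (Ioi 0), ∀ s ∈ S, ‖1 + (ε : ℂ) * s‖ < 1 := by
    rw [Filter.eventually_all_finite hS]
    intro s hs
    have hre := h s hs
    have hp : 0 < (-2 * s.re) / (Complex.normSq s + 1) :=
      div_pos (by linarith) (by have := Complex.normSq_nonneg s; linarith)
    filter_upwards [Ioo_mem_nhdsGT hp] with ε hε
    have h0 := hε.1
    have h2 : ε * (Complex.normSq s + 1) < -2 * s.re :=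
      (lt_div_iff₀ (by have := Complex.normSq_nonneg s; linarith)).1 hε.2
    have h3 : ‖1 + (ε : ℂ) * s‖ ^ 2 < 1 := by
      rw [← Complex.normSq_eq_norm_sq, Complex.normSq_apply]
      rw [Complex.normSq_apply] at h2
      simp
      nlinarith
    have := norm_nonneg (1 + (ε : ℂ) * s)
    nlinarith
  obtain ⟨ε, h2, h3⟩ := (h1.and self_mem_nhdsWithin).exists
  exact ⟨ε, h3, h2⟩

attribute [local instance] Matrix.linftyOpNormedRing Matrix.linftyOpNormedAlgebra in
theorem aux_mat_pow {m : Type*} [Fintype m] [DecidableEq m] [Nonempty m] (M : Matrix m m ℂ)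
    (h : ∀ s ∈ spectrum ℂ M, ‖s‖ < 1) (i j : m) :
    Tendsto (fun k => (M ^ k) i j) atTop (nhds 0) := by
  have h1 := aux_pow_zero M h
  have h2 : Continuous (fun X : Matrix m m ℂ => X i j) := by fun_prop
  simpa [Function.comp_def] using (h2.tendsto 0).comp h1

theorem aux_real_pow {m : Type*} [Fintype m] [DecidableEq m] [Nonempty m] (M : Matrix m m ℝ)
    (hM : IsHurwitz M) : ∃ ε : ℝ, 0 < ε ∧
      ∀ i j, Tendsto (fun k : ℕ => ((1 + ε • M) ^ k) i j) atTop (nhds 0) := by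
  set MC := M.map (algebraMap ℝ ℂ) with hMC
  obtain ⟨ε, hε, h1⟩ := aux_step (spectrum ℂ MC) (Matrix.finite_spectrum MC)
    (fun s hs => hM s ((aux_mem_spec _ _).1 hs))
  refine ⟨ε, hε, fun i j => ?_⟩
  have hεC : (ε : ℂ) ≠ 0 := by exact_mod_cast hε.ne'
  have hmap : (1 + ε • M).map (algebraMap ℝ ℂ) = 1 + (ε : ℂ) • MC := by
    ext i j
    by_cases hij : i = j <;> simp [hMC, hij]
  have h2 : ∀ s ∈ spectrum ℂ (1 + (ε : ℂ) • MC), ‖s‖ < 1 := by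
    intro s hs
    have h3 : (s - 1) / ε ∈ spectrum ℂ MC := by
      rw [aux_mem_spec] at hs ⊢
      have : s • (1 : Matrix m m ℂ) - (1 + (ε : ℂ) • MC)
          = (ε : ℂ) • (((s - 1) / ε) • (1 : Matrix m m ℂ) - MC) := by
        rw [smul_sub, smul_smul, mul_div_cancel₀ _ hεC, sub_smul, one_smul]
        abel
      rw [this, Matrix.det_smul] at hs
      exact (mul_eq_zero.1 hs).resolve_left (pow_ne_zero _ hεC)
    have := h1 _ h3
    rwa [mul_div_cancel₀ _ hεC, add_sub_cancel] at this
  have h4 := aux_mat_pow _ h2 i j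
  rw [← hmap] at h4
  have h5 := (Complex.continuous_re.tendsto 0).comp h4
  refine (h5.congr fun k => ?_)
  have : (1 + ε • M).map (algebraMap ℝ ℂ) ^ k = ((1 + ε • M) ^ k).map (algebraMap ℝ ℂ) := by
    simpa using ((algebraMap ℝ ℂ).mapMatrix.map_pow (1 + ε • M) k).symm
  rw [Function.comp_apply, this]
  simp

theorem aux_dot_bound {m : Type*} [Fintype m] (P : Matrix m m ℝ) (v w : m → ℝ) :
    |v ⬝ᵥ P *ᵥ w| ≤ (∑ i, ∑ j, |P i j|) * (‖v‖ * ‖w‖) := by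
  simp only [dotProduct, mulVec, Finset.mul_sum, Finset.sum_mul]
  refine (Finset.abs_sum_le_sum_abs _ _).trans (Finset.sum_le_sum fun i _ => ?_)
  refine (Finset.abs_sum_le_sum_abs _ _).trans (Finset.sum_le_sum fun j _ => ?_)
  rw [abs_mul, abs_mul]
  have h1 : |v i| ≤ ‖v‖ := norm_le_pi_norm v i
  have h2 : |w j| ≤ ‖w‖ := norm_le_pi_norm w j
  calc |v i| * (|P i j| * |w j|) = |P i j| * (|v i| * |w j|) := by ring
    _ ≤ _ := by gcongr

theorem aux_norm_sq {m : Type*} [Fintype m] (v : m → ℝ) : ‖v‖ * ‖v‖ ≤ v ⬝ᵥ v := by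
  have h0 : 0 ≤ v ⬝ᵥ v := by
    simp only [dotProduct]; exact Finset.sum_nonneg fun i _ => mul_self_nonneg _
  have : ‖v‖ ≤ Real.sqrt (v ⬝ᵥ v) := by
    rw [pi_norm_le_iff_of_nonneg (Real.sqrt_nonneg _)]
    intro i
    rw [Real.norm_eq_abs]
    apply Real.abs_le_sqrt
    rw [sq]
    exact Finset.single_le_sum (f := fun i => v i * v i) (fun i _ => mul_self_nonneg _)
      (Finset.mem_univ i)
  calc ‖v‖ * ‖v‖ ≤ Real.sqrt (v ⬝ᵥ v) * Real.sqrt (v ⬝ᵥ v) := by gcongr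
    _ = _ := Real.mul_self_sqrt h0

theorem aux_lyap {m : Type*} [Fintype m] [DecidableEq m] [Nonempty m] (M : Matrix m m ℝ)
    (hM : IsHurwitz M) : ∃ P : Matrix m m ℝ, Pᵀ = P ∧ (∀ w, w ⬝ᵥ w ≤ w ⬝ᵥ P *ᵥ w) ∧
      ∃ c : ℝ, 0 < c ∧ ∀ w, 2 * (w ⬝ᵥ P *ᵥ (M *ᵥ w)) ≤ -c * (w ⬝ᵥ w) := by
  obtain ⟨ε, hε, h1⟩ := aux_real_pow M hM
  set Q := 1 + ε • M with hQ
  have h2 : Tendsto (fun k : ℕ => ∑ i, ∑ j, |((Q ^ k)ᵀ * Q ^ k) i j|) atTop (nhds 0) := by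
    have : Tendsto (fun k : ℕ => ∑ i, ∑ j, |((Q ^ k)ᵀ * Q ^ k) i j|) atTop
        (nhds (∑ i : m, ∑ j : m, |∑ l : m, (0:ℝ) * 0|)) := by
      refine tendsto_finsetSum _ fun i _ => tendsto_finsetSum _ fun j _ => ?_
      simp only [Matrix.mul_apply, Matrix.transpose_apply]
      exact (tendsto_finsetSum _ fun l _ => (h1 l i).mul (h1 l j)).abs
    simpa using this
  obtain ⟨k, hk, hk0⟩ := ((h2.eventually_lt_const (show (0:ℝ) < 1/2 by norm_num)).and
    (eventually_gt_atTop 0)).exists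
  have hdot : ∀ (R : Matrix m m ℝ) (v w : m → ℝ), v ⬝ᵥ (Rᵀ * R) *ᵥ w = (R *ᵥ v) ⬝ᵥ (R *ᵥ w) := by
    intro R v w
    rw [← Matrix.mulVec_mulVec, Matrix.dotProduct_mulVec, Matrix.vecMul_transpose]
  have hnn : ∀ v : m → ℝ, 0 ≤ v ⬝ᵥ v := fun v => by
    simp only [dotProduct]; exact Finset.sum_nonneg fun i _ => mul_self_nonneg _
  set P := ∑ j ∈ Finset.range k, (Q ^ j)ᵀ * Q ^ j with hP
  have hPdot : ∀ v w : m → ℝ, v ⬝ᵥ P *ᵥ w =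
      ∑ j ∈ Finset.range k, (Q ^ j *ᵥ v) ⬝ᵥ (Q ^ j *ᵥ w) := by
    intro v w
    rw [hP, Matrix.sum_mulVec, dotProduct_sum]
    exact Finset.sum_congr rfl fun j _ => hdot _ _ _
  have hPnn : ∀ v, 0 ≤ v ⬝ᵥ P *ᵥ v := fun v => by
    rw [hPdot]; exact Finset.sum_nonneg fun j _ => hnn _
  have hPsymm : ∀ v w, v ⬝ᵥ P *ᵥ w = w ⬝ᵥ P *ᵥ v := fun v w => by
    rw [hPdot, hPdot]; exact Finset.sum_congr rfl fun j _ => dotProduct_comm _ _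
  refine ⟨P, ?_, ?_, 1 / (2 * ε), by positivity, ?_⟩
  · rw [hP, Matrix.transpose_sum]
    refine Finset.sum_congr rfl fun j _ => ?_
    rw [Matrix.transpose_mul, Matrix.transpose_transpose]
  · intro w
    rw [hPdot]
    have := Finset.single_le_sum (f := fun j => (Q ^ j *ᵥ w) ⬝ᵥ (Q ^ j *ᵥ w))
      (fun j _ => hnn _) (Finset.mem_range.2 hk0)
    simpa using this
  · intro w
    have e1 : (Q *ᵥ w) ⬝ᵥ P *ᵥ (Q *ᵥ w) - w ⬝ᵥ P *ᵥ w
        = (Q ^ k *ᵥ w) ⬝ᵥ (Q ^ k *ᵥ w) - w ⬝ᵥ w := by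
      rw [hPdot, hPdot, ← Finset.sum_sub_distrib]
      have := Finset.sum_range_sub (fun j => (Q ^ j *ᵥ w) ⬝ᵥ (Q ^ j *ᵥ w)) k
      simp only [pow_zero, Matrix.one_mulVec] at this
      rw [← this]
      refine Finset.sum_congr rfl fun j _ => ?_
      simp only [Matrix.mulVec_mulVec, pow_succ]
    have e2 : (Q ^ k *ᵥ w) ⬝ᵥ (Q ^ k *ᵥ w) ≤ 1 / 2 * (w ⬝ᵥ w) := by
      rw [← hdot]
      refine (le_abs_self _).trans ((aux_dot_bound _ _ _).trans ?_)
      have := aux_norm_sq w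
      have h0 := mul_self_nonneg ‖w‖
      nlinarith
    have e3 : (Q *ᵥ w) ⬝ᵥ P *ᵥ (Q *ᵥ w) - w ⬝ᵥ P *ᵥ w
        = 2 * ε * (w ⬝ᵥ P *ᵥ (M *ᵥ w)) + ε * ε * ((M *ᵥ w) ⬝ᵥ P *ᵥ (M *ᵥ w)) := by
      have hQw : Q *ᵥ w = w + ε • (M *ᵥ w) := by
        rw [hQ, Matrix.add_mulVec, Matrix.one_mulVec, Matrix.smul_mulVec]
      rw [hQw, Matrix.mulVec_add, Matrix.mulVec_smul]
      simp only [add_dotProduct, dotProduct_add, smul_dotProduct, dotProduct_smul, smul_eq_mul]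
      rw [hPsymm (M *ᵥ w) w]
      ring
    have e4 := mul_nonneg (mul_nonneg hε.le hε.le) (hPnn (M *ᵥ w))
    have e5 : ε * (2 * (w ⬝ᵥ P *ᵥ (M *ᵥ w))) ≤ - (1/2) * (w ⬝ᵥ w) := by linarith
    have e6 : -(1 / (2 * ε)) * (w ⬝ᵥ w) = (- (1/2) * (w ⬝ᵥ w)) / ε := by field_simp
    rw [e6, le_div_iff₀ hε]
    linarith

theorem aux_decay {m : Type*} [Fintype m] [DecidableEq m] [Nonempty m] (M : Matrix m m ℝ)
    (hM : IsHurwitz M) (T : ℝ) (hT : 0 < T) (c2 : ℝ) :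
    ∃ b0 : ℝ, ∀ b, b0 ≤ b → ∀ (η g : ℝ → m → ℝ),
      (∀ t ∈ Ico (0:ℝ) T, HasDerivWithinAt η ((b / (T - t)) • (M *ᵥ η t) + g t) (Ico 0 T) t) →
      (∀ t ∈ Ico (0:ℝ) T, ‖g t‖ ≤ c2 / (T - t) * ‖η t‖) →
      ∃ C : ℝ, 0 ≤ C ∧ ∀ t ∈ Ico (0:ℝ) T, η t ⬝ᵥ η t ≤ (C * (T - t) ^ 2) ^ 2 := by
  obtain ⟨P, hPs, hP1, c, hc, hPM⟩ := aux_lyap M hM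
  set p := ∑ i, ∑ j, |P i j| with hp
  have hp0 : 0 ≤ p := Finset.sum_nonneg fun i _ => Finset.sum_nonneg fun j _ => abs_nonneg _
  have hnn : ∀ v : m → ℝ, 0 ≤ v ⬝ᵥ v := fun v => by
    simp only [dotProduct]; exact Finset.sum_nonneg fun i _ => mul_self_nonneg _
  have hPsymm : ∀ v w, v ⬝ᵥ P *ᵥ w = w ⬝ᵥ P *ᵥ v := fun v w => by
    rw [Matrix.dotProduct_mulVec, ← Matrix.mulVec_transpose, hPs, dotProduct_comm]
  refine ⟨(4 * p + 2 * p * |c2|) / c, fun b hb η g hη hg => ?_⟩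
  rw [div_le_iff₀ hc] at hb
  set V : ℝ → ℝ := fun t => η t ⬝ᵥ P *ᵥ η t with hV
  set V' : ℝ → ℝ := fun t => 2 * (η t ⬝ᵥ P *ᵥ ((b / (T - t)) • (M *ᵥ η t) + g t)) with hV'
  have hVd : ∀ t ∈ Ico (0:ℝ) T, HasDerivWithinAt V (V' t) (Ico 0 T) t := by
    intro t ht
    have h1 := hasDerivWithinAt_pi.1 (hη t ht)
    set d := (b / (T - t)) • (M *ᵥ η t) + g t with hd
    have h2 : HasDerivWithinAt V (∑ i, (d i * (∑ j, P i j * η t j) +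
        η t i * ∑ j, P i j * d j)) (Ico 0 T) t := by
      simp only [hV, dotProduct, mulVec]
      refine HasDerivWithinAt.fun_sum fun i _ => ?_
      refine (h1 i).mul ?_
      exact HasDerivWithinAt.fun_sum fun j _ => (h1 j).const_mul (P i j)
    convert h2 using 1
    rw [Finset.sum_add_distrib]
    change 2 * (η t ⬝ᵥ P *ᵥ d) = d ⬝ᵥ P *ᵥ η t + η t ⬝ᵥ P *ᵥ d
    rw [hPsymm d (η t)]; ring
  have hV'le : ∀ t ∈ Ico (0:ℝ) T, V' t ≤ -4 / (T - t) * V t := by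
    intro t ht
    have hs : 0 < T - t := by linarith [ht.2]
    have e1 : V' t = (b / (T - t)) * (2 * (η t ⬝ᵥ P *ᵥ (M *ᵥ η t))) + 2 * (η t ⬝ᵥ P *ᵥ g t) := by
      simp only [hV', Matrix.mulVec_add, Matrix.mulVec_smul, dotProduct_add, dotProduct_smul,
        smul_eq_mul]
      ring
    set q := η t ⬝ᵥ η t with hq
    have hq0 : 0 ≤ q := hnn _
    have e2 : η t ⬝ᵥ P *ᵥ g t ≤ p * |c2| * q / (T - t) := by
      refine (le_abs_self _).trans ((aux_dot_bound _ _ _).trans ?_)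
      rw [← hp]
      have h3 := hg t ht
      have h4 := aux_norm_sq (η t)
      calc p * (‖η t‖ * ‖g t‖) ≤ p * (‖η t‖ * (|c2| / (T - t) * ‖η t‖)) := by
            gcongr
            refine h3.trans ?_
            gcongr
            exact le_abs_self _
        _ = p * (|c2| / (T - t)) * (‖η t‖ * ‖η t‖) := by ring
        _ ≤ p * (|c2| / (T - t)) * q := by gcongr
        _ = _ := by ring
    have e3 : V t ≤ p * q := by
      refine (le_abs_self _).trans ((aux_dot_bound _ _ _).trans ?_)
      rw [← hp]
      have h4 := aux_norm_sq (η t)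
      gcongr
    have hb0 : 0 ≤ b := by
      have : 0 ≤ b * c := le_trans (by positivity) hb
      exact nonneg_of_mul_nonneg_left this hc
    have e4 : (b / (T - t)) * (2 * (η t ⬝ᵥ P *ᵥ (M *ᵥ η t))) ≤ (b / (T - t)) * (-c * q) :=
      mul_le_mul_of_nonneg_left (hPM _) (by positivity)
    have e5 : -4 / (T - t) * (p * q) ≤ -4 / (T - t) * V t := by
      apply mul_le_mul_of_nonpos_left e3
      exact div_nonpos_of_nonpos_of_nonneg (by norm_num) hs.le
    have e6 : (b / (T - t)) * (-c * q) + 2 * (p * |c2| * q / (T - t)) ≤ -4 / (T - t) * (p * q) := by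
      have : (b / (T - t)) * (-c * q) + 2 * (p * |c2| * q / (T - t)) - -4 / (T - t) * (p * q)
          = -((b * c - (4 * p + 2 * p * |c2|)) * q) / (T - t) := by
        field_simp; ring
      have h7 : -((b * c - (4 * p + 2 * p * |c2|)) * q) / (T - t) ≤ 0 :=
        div_nonpos_of_nonpos_of_nonneg
          (neg_nonpos.2 (mul_nonneg (by linarith) hq0)) hs.le
      linarith
    linarith
  set W : ℝ → ℝ := fun t => V t / (T - t) ^ 4 with hW
  have hWd : ∀ t ∈ Ico (0:ℝ) T, HasDerivWithinAt W
      ((V' t * (T - t) ^ 4 - V t * (4 * (T - t) ^ 3 * (-1))) / ((T - t) ^ 4) ^ 2) (Ico 0 T) t := by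
    intro t ht
    have hs : 0 < T - t := by linarith [ht.2]
    have h1 : HasDerivWithinAt (fun t : ℝ => (T - t) ^ 4) (4 * (T - t) ^ 3 * (-1)) (Ico 0 T) t := by
      have := ((hasDerivWithinAt_id t (Ico 0 T)).const_sub T).fun_pow 4
      simpa using this
    exact (hVd t ht).div h1 (by positivity)
  have hanti : AntitoneOn W (Ico 0 T) := by
    apply antitoneOn_of_hasDerivWithinAt_nonpos (convex_Ico 0 T)
      (f' := fun t => (V' t * (T - t) ^ 4 - V t * (4 * (T - t) ^ 3 * (-1))) / ((T - t) ^ 4) ^ 2)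
    · exact fun t ht => (hWd t ht).continuousWithinAt
    · intro t ht
      exact (hWd t (interior_subset ht)).mono interior_subset
    · intro t ht
      have ht' := interior_subset ht
      have hs : 0 < T - t := by linarith [ht'.2]
      apply div_nonpos_of_nonpos_of_nonneg _ (by positivity)
      have h1 := mul_le_mul_of_nonneg_right (hV'le t ht') (show 0 ≤ (T - t) ^ 4 by positivity)
      have h2 : -4 / (T - t) * V t * (T - t) ^ 4 = -4 * V t * (T - t) ^ 3 := by
        field_simp
      linarith
  refine ⟨Real.sqrt (W 0), Real.sqrt_nonneg _, fun t ht => ?_⟩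
  have hs : 0 < T - t := by linarith [ht.2]
  have h1 := hanti (left_mem_Ico.2 hT) ht ht.1
  have hW0 : 0 ≤ W 0 := div_nonneg ((hnn _).trans (hP1 _)) (by positivity)
  rw [mul_pow, Real.sq_sqrt hW0]
  refine (hP1 _).trans ?_
  have h2 : V t / (T - t) ^ 4 ≤ W 0 := h1
  rw [div_le_iff₀ (by positivity)] at h2
  calc _ ≤ _ := h2
    _ = _ := by ring

theorem aux_rpow_deriv (b T t : ℝ) (ht : t < T) (p : ℕ) :
    HasDerivAt (fun s => (b / (T - s)) ^ p) (p / (T - t) * (b / (T - t)) ^ p) t := by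
  have hs : T - t ≠ 0 := by linarith
  have h1 : HasDerivAt (fun s : ℝ => T - s) (-1) t := by
    simpa using (hasDerivAt_id t).const_sub T
  have h2 := (((hasDerivAt_const t b).div h1 hs).pow p)
  refine h2.congr_deriv ?_
  rcases p with _ | p
  · simp
  · simp only [Pi.div_apply, Nat.add_sub_cancel]
    have h3 : (0 * (T - t) - b * -1) / (T - t) ^ 2 = (b / (T - t)) / (T - t) := by
      field_simp
      ring
    rw [h3]
    ring

/-- Theorem 1 (prescribed-time leader-following consensus by distributed
state feedback): under Assumption 1 (with possibly unknown growth rates `ρ_{k,j}`),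
positive definiteness of `L̄ = L_G + B_L` and Hurwitzness of
`A_c = I_N ⊗ A - L̄ ⊗ (B K)`, there exists a proportional coefficient `b ≥ T` such
that for every C¹ family `x_0,…,x_N : [0,T) → ℝⁿ` solving the closed-loop system
with the distributed protocol
`u_k = -K Λ_{r(t)} (∑_j a_{kj}(x_k - x_j) + b_k (x_k - x_0))` (with `r(t) = b/(T-t)`
and `Λ_r = diag(rⁿ,…,r)`), each follower satisfies: (i) `x_k - x_0` is bounded on
`[0,T)`; (ii) there are `κ > 0` and `C ≥ 0` with
`|x_k(t) - x_0(t)| ≤ C (T-t)^{(κ+2)/2}` on `[0,T)`, so `x_k(t) - x_0(t) → 0` as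
`t → T⁻`; (iii) `u_k` is bounded on `[0,T)`. -/
theorem prescribed_time_state_feedback_consensus
    (n N : ℕ) (hn : 0 < n) (hN : 0 < N)
    (T : ℝ) (hT : 0 < T)
    (A : Matrix (Fin n) (Fin n) ℝ)
    (hA : ∀ i j : Fin n, A i j = if (i : ℕ) + 1 = (j : ℕ) then 1 else 0)
    (B : Fin n → ℝ) (hB : ∀ i : Fin n, B i = if (i : ℕ) = n - 1 then 1 else 0)
    -- Agent nonlinearities and Assumption 1
    (F : Fin (N + 1) → ℝ → (Fin n → ℝ) → (Fin n → ℝ))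
    (ρ : Fin (N + 1) → Fin n → ℝ) (hρ : ∀ k j, 0 ≤ ρ k j)
    (hF : ∀ k t (ξ ζ : Fin n → ℝ) (i : Fin n),
      |F k t ξ i - F 0 t ζ i| ≤ ∑ j ∈ Finset.Iic i, ρ k j * |ξ j - ζ j|)
    -- Communication topology
    (a : Fin N → Fin N → ℝ)
    (ha_symm : ∀ i j, a i j = a j i) (ha_nonneg : ∀ i j, 0 ≤ a i j)
    (ha_diag : ∀ i, a i i = 0)
    (bL : Fin N → ℝ) (hbL : ∀ k, bL k = 0 ∨ bL k = 1)
    (Lbar : Matrix (Fin N) (Fin N) ℝ)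
    (hLbar : Lbar =
      (Matrix.diagonal fun i => ∑ j, a i j) - Matrix.of a + Matrix.diagonal bL)
    (hLbarPD : Lbar.PosDef)
    -- Feedback gain making A_c Hurwitz
    (K : Fin n → ℝ)
    (Ac : Matrix (Fin N × Fin n) (Fin N × Fin n) ℝ)
    (hAcdef : Ac = (1 : Matrix (Fin N) (Fin N) ℝ) ⊗ₖ A - Lbar ⊗ₖ vecMulVec B K)
    (hAc : IsHurwitz Ac) :
    ∃ b : ℝ, T ≤ b ∧
      ∀ (x : Fin (N + 1) → ℝ → (Fin n → ℝ)) (u : Fin N → ℝ → ℝ),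
        -- the distributed state-feedback protocol
        (∀ (k : Fin N) (t : ℝ), u k t =
          -(K ⬝ᵥ ((Matrix.diagonal fun i : Fin n => (b / (T - t)) ^ (n - (i : ℕ))) *ᵥ
            (∑ j, a k j • (x k.succ t - x j.succ t) +
              bL k • (x k.succ t - x 0 t))))) →
        -- leader dynamics (u_0 ≡ 0)
        (∀ t ∈ Set.Ico (0 : ℝ) T,
          HasDerivWithinAt (x 0) (A *ᵥ x 0 t + F 0 t (x 0 t)) (Set.Ico 0 T) t) →
        -- follower dynamics
        (∀ (k : Fin N), ∀ t ∈ Set.Ico (0 : ℝ) T,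
          HasDerivWithinAt (x k.succ)
            (A *ᵥ x k.succ t + u k t • B + F k.succ t (x k.succ t))
            (Set.Ico 0 T) t) →
        ∀ k : Fin N,
          -- (i) boundedness of the tracking error
          (∃ C1 : ℝ, ∀ t ∈ Set.Ico (0 : ℝ) T,
            enorm' (fun i => x k.succ t i - x 0 t i) ≤ C1) ∧
          -- (ii) prescribed-time decay rate and convergence as t → T⁻
          (∃ κ : ℝ, 0 < κ ∧ ∃ C : ℝ, 0 ≤ C ∧
            ∀ t ∈ Set.Ico (0 : ℝ) T,
              enorm' (fun i => x k.succ t i - x 0 t i) ≤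
                C * (T - t) ^ ((κ + 2) / 2)) ∧
          Tendsto (fun t => enorm' (fun i => x k.succ t i - x 0 t i))
            (nhdsWithin T (Set.Iio T)) (nhds 0) ∧
          -- (iii) boundedness of the control input
          (∃ Cu : ℝ, ∀ t ∈ Set.Ico (0 : ℝ) T, |u k t| ≤ Cu) := by
  
  have hNe : Nonempty (Fin N × Fin n) := ⟨(⟨0, hN⟩, ⟨0, hn⟩)⟩
  set R : ℝ := ∑ k, ∑ j, ρ k j with hR
  have hR0 : 0 ≤ R := Finset.sum_nonneg fun k _ => Finset.sum_nonneg fun j _ => hρ k j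
  obtain ⟨b0, hb0⟩ := aux_decay Ac hAc T hT (n + T * R)
  refine ⟨max T b0, le_max_left _ _, ?_⟩
  have hbT : T ≤ max T b0 := le_max_left _ _
  have hbb : b0 ≤ max T b0 := le_max_right _ _
  generalize max T b0 = b at hbT hbb
  intro x u hu hx0 hx k
  set η : ℝ → Fin N × Fin n → ℝ := fun t l =>
    (b / (T - t)) ^ (n - (l.2 : ℕ)) * (x l.1.succ t l.2 - x 0 t l.2) with hη
  set g : ℝ → Fin N × Fin n → ℝ := fun t l =>
    ((n - (l.2 : ℕ) : ℕ) : ℝ) / (T - t) * η t l + (b / (T - t)) ^ (n - (l.2 : ℕ)) *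
      (F l.1.succ t (x l.1.succ t) l.2 - F 0 t (x 0 t) l.2) with hg
  have hr1 : ∀ t ∈ Ico (0:ℝ) T, 1 ≤ b / (T - t) := by
    intro t ht
    rw [le_div_iff₀ (by linarith [ht.2])]
    linarith [ht.1]
  -- the control in the new coordinates
  have hu' : ∀ (k : Fin N) (t : ℝ), u k t = -∑ j, K j * ∑ l, Lbar k l * η t (l, j) := by
    intro k t
    rw [hu]
    congr 1
    simp only [dotProduct, Matrix.mulVec_diagonal]
    refine Finset.sum_congr rfl fun j _ => ?_
    congr 1
    have h1 : ∀ l, Lbar k l = (if k = l then (∑ j, a k j) + bL k else 0) - a k l := by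
      intro l
      rw [hLbar]
      simp only [Matrix.add_apply, Matrix.sub_apply, Matrix.diagonal_apply, Matrix.of_apply]
      split_ifs <;> ring
    simp only [h1, sub_mul, Finset.sum_sub_distrib, ite_mul, zero_mul, Finset.sum_ite_eq,
      Finset.mem_univ, if_true, Pi.add_apply, Finset.sum_apply, Pi.smul_apply, Pi.sub_apply,
      smul_eq_mul, hη]
    rw [mul_add, Finset.mul_sum, add_mul, Finset.sum_mul, add_sub_right_comm,
      ← Finset.sum_sub_distrib]
    congr 1
    · refine Finset.sum_congr rfl fun l _ => ?_
      ring
    · ring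
  have hder : ∀ t ∈ Ico (0:ℝ) T,
      HasDerivWithinAt η ((b / (T - t)) • (Ac *ᵥ η t) + g t) (Ico 0 T) t := by
    intro t ht
    rw [hasDerivWithinAt_pi]
    rintro ⟨k, i⟩
    have h1 := hasDerivWithinAt_pi.1 (hx0 t ht) i
    have h2 := hasDerivWithinAt_pi.1 (hx k t ht) i
    have h3 := (aux_rpow_deriv b T t ht.2 (n - (i : ℕ))).hasDerivWithinAt (s := Ico 0 T)
    refine (h3.mul (h2.sub h1)).congr_deriv ?_
    have hAcη : (Ac *ᵥ η t) (k, i) = (∑ j, A i j * η t (k, j)) + B i * u k t := by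
      rw [hu', hAcdef]
      simp only [mulVec, dotProduct, Fintype.sum_prod_type, Matrix.sub_apply,
        Matrix.kroneckerMap_apply, sub_mul, Finset.sum_sub_distrib, Matrix.one_apply,
        ite_mul, one_mul, zero_mul, vecMulVec_apply]
      rw [mul_neg, ← sub_eq_add_neg]
      congr 1
      · rw [Finset.sum_eq_single k]
        · simp
        · intro l _ hl
          simp [Ne.symm hl]
        · simp
      · rw [Finset.sum_comm, Finset.mul_sum]
        refine Finset.sum_congr rfl fun j _ => ?_
        rw [Finset.mul_sum, Finset.mul_sum]
        refine Finset.sum_congr rfl fun l _ => ?_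
        ring
    have hA1 : (b / (T - t)) * (∑ j, A i j * η t (k, j)) =
        (b / (T - t)) ^ (n - (i : ℕ)) * ((A *ᵥ x k.succ t) i - (A *ᵥ x 0 t) i) := by
      simp only [mulVec, dotProduct, ← Finset.sum_sub_distrib, Finset.mul_sum]
      refine Finset.sum_congr rfl fun j _ => ?_
      rw [hA]
      split_ifs with hij
      · have : n - (i : ℕ) = (n - (j : ℕ)) + 1 := by have := j.2; omega
        simp only [hη]
        rw [this, pow_succ]
        ring
      · simp
    have hB1 : (b / (T - t)) * B i = (b / (T - t)) ^ (n - (i : ℕ)) * B i := by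
      rw [hB]
      split_ifs with hi
      · have : n - (i : ℕ) = 1 := by omega
        rw [this, pow_one]
      · simp
    simp only [Pi.add_apply, Pi.smul_apply, Pi.sub_apply, smul_eq_mul]
    rw [hAcη, mul_add, hA1, ← mul_assoc, hB1]
    simp only [hg, hη]
    ring
  have hgb : ∀ t ∈ Ico (0:ℝ) T, ‖g t‖ ≤ (n + T * R) / (T - t) * ‖η t‖ := by
    intro t ht
    have hs : 0 < T - t := by linarith [ht.2]
    have hr := hr1 t ht
    rw [pi_norm_le_iff_of_nonneg (by positivity)]
    rintro ⟨k, i⟩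
    have hn1 : ∀ l, |η t l| ≤ ‖η t‖ := fun l => norm_le_pi_norm (η t) l
    have hΦ : |(b / (T - t)) ^ (n - (i : ℕ)) *
        (F k.succ t (x k.succ t) i - F 0 t (x 0 t) i)| ≤ R * ‖η t‖ := by
      rw [abs_mul, abs_of_nonneg (by positivity)]
      calc _ ≤ (b / (T - t)) ^ (n - (i : ℕ)) *
            ∑ j ∈ Finset.Iic i, ρ k.succ j * |x k.succ t j - x 0 t j| := by
            gcongr
            exact hF _ _ _ _ _
        _ ≤ ∑ j ∈ Finset.Iic i, ρ k.succ j * ‖η t‖ := by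
            rw [Finset.mul_sum]
            refine Finset.sum_le_sum fun j hj => ?_
            have hji : (j : ℕ) ≤ i := by
              have h := Finset.mem_Iic.1 hj
              exact h
            calc _ = ρ k.succ j * ((b / (T - t)) ^ (n - (i : ℕ)) * |x k.succ t j - x 0 t j|) := by
                  ring
              _ ≤ ρ k.succ j * |η t (k, j)| := by
                  refine mul_le_mul_of_nonneg_left ?_ (hρ _ _)
                  simp only [hη]
                  rw [abs_mul, abs_of_nonneg (by positivity : 0 ≤ (b / (T - t)) ^ (n - (j : ℕ)))]
                  refine mul_le_mul_of_nonneg_right ?_ (abs_nonneg _)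
                  exact pow_le_pow_right₀ hr (by omega)
              _ ≤ _ := mul_le_mul_of_nonneg_left (hn1 _) (hρ _ _)
        _ = (∑ j ∈ Finset.Iic i, ρ k.succ j) * ‖η t‖ := by rw [Finset.sum_mul]
        _ ≤ R * ‖η t‖ := by
            gcongr
            refine (Finset.sum_le_sum_of_subset_of_nonneg (Finset.subset_univ _)
              fun j _ _ => hρ _ j).trans ?_
            exact Finset.single_le_sum (f := fun k => ∑ j, ρ k j)
              (fun k _ => Finset.sum_nonneg fun j _ => hρ k j) (Finset.mem_univ k.succ)
    have hD : |((n - (i : ℕ) : ℕ) : ℝ) / (T - t) * η t (k, i)| ≤ n / (T - t) * ‖η t‖ := by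
      rw [abs_mul, abs_of_nonneg (by positivity)]
      gcongr
      · omega
      · exact hn1 _
    have h1T : R * ‖η t‖ ≤ T * R / (T - t) * ‖η t‖ := by
      gcongr
      rw [le_div_iff₀ hs]
      nlinarith [ht.1]
    calc ‖g t (k, i)‖ ≤ _ := abs_add_le _ _
      _ ≤ n / (T - t) * ‖η t‖ + T * R / (T - t) * ‖η t‖ := add_le_add hD (hΦ.trans h1T)
      _ = _ := by ring
  obtain ⟨C, hC0, hC⟩ := hb0 b hbb η g hder hgb
  have hmain : ∀ t ∈ Ico (0:ℝ) T,
      enorm' (fun i => x k.succ t i - x 0 t i) ≤ C * (T - t) ^ 2 := by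
    intro t ht
    have hs : 0 < T - t := by linarith [ht.2]
    have hr := hr1 t ht
    refine Real.sqrt_le_iff.2 ⟨by positivity, le_trans ?_ (hC t ht)⟩
    calc ∑ i, (x k.succ t i - x 0 t i) ^ 2 ≤ ∑ i, η t (k, i) * η t (k, i) := by
          refine Finset.sum_le_sum fun i _ => ?_
          have h1 : 1 ≤ (b / (T - t)) ^ (n - (i : ℕ)) := one_le_pow₀ hr
          have h2 : 1 ≤ ((b / (T - t)) ^ (n - (i : ℕ))) ^ 2 := one_le_pow₀ h1
          have h3 := sq_nonneg (x k.succ t i - x 0 t i)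
          simp only [hη]
          nlinarith
      _ ≤ ∑ k, ∑ i, η t (k, i) * η t (k, i) :=
          Finset.single_le_sum (f := fun k => ∑ i, η t (k, i) * η t (k, i))
            (fun k _ => Finset.sum_nonneg fun i _ => mul_self_nonneg _) (Finset.mem_univ k)
      _ = η t ⬝ᵥ η t := by
          simp only [dotProduct, Fintype.sum_prod_type]
  have hT2 : ∀ t ∈ Ico (0:ℝ) T, C * (T - t) ^ 2 ≤ C * T ^ 2 := by
    intro t ht
    have hs : 0 < T - t := by linarith [ht.2]
    gcongr
    linarith [ht.1]
  refine ⟨⟨C * T ^ 2, fun t ht => (hmain t ht).trans (hT2 t ht)⟩, ⟨2, by norm_num, C, hC0, ?_⟩,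
    ?_, ?_⟩
  · intro t ht
    have : ((2:ℝ) + 2) / 2 = ((2 : ℕ) : ℝ) := by norm_num
    rw [this, Real.rpow_natCast]
    exact hmain t ht
  · have h1 : Tendsto (fun t : ℝ => C * (T - t) ^ 2) (nhdsWithin T (Iio T)) (nhds 0) := by
      have h2 : Continuous (fun t : ℝ => C * (T - t) ^ 2) := by fun_prop
      have h3 := h2.tendsto T
      simp only [sub_self, ne_eq, OfNat.ofNat_ne_zero, not_false_eq_true, zero_pow,
        mul_zero] at h3
      exact h3.mono_left nhdsWithin_le_nhds
    refine tendsto_of_tendsto_of_tendsto_of_le_of_le' tendsto_const_nhds h1 ?_ ?_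
    · exact Eventually.of_forall fun t => Real.sqrt_nonneg _
    · filter_upwards [Ico_mem_nhdsLT hT] with t ht using hmain t ht
  · refine ⟨∑ j, |K j| * ∑ l, |Lbar k l| * (C * T ^ 2), fun t ht => ?_⟩
    have hs : 0 < T - t := by linarith [ht.2]
    have hηb : ‖η t‖ ≤ C * T ^ 2 := by
      refine le_trans ?_ (hT2 t ht)
      refine abs_le_of_sq_le_sq' ?_ (by positivity) |>.2
      rw [sq]
      exact (aux_norm_sq _).trans (hC t ht)
    rw [hu', abs_neg]
    refine (Finset.abs_sum_le_sum_abs _ _).trans (Finset.sum_le_sum fun j _ => ?_)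
    rw [abs_mul]
    refine mul_le_mul_of_nonneg_left ?_ (abs_nonneg _)
    refine (Finset.abs_sum_le_sum_abs _ _).trans (Finset.sum_le_sum fun l _ => ?_)
    rw [abs_mul]
    exact mul_le_mul_of_nonneg_left ((norm_le_pi_norm (η t) (l, j)).trans hηb) (abs_nonneg _)
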